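/- Let R be a commutative noetherian ring and M a Gorenstein injective R-module. Then for every prime ideal p of R, depth R_p ≤ width_{R_p} M_p. -/

import Mathlib

open CategoryTheory

universe u

/-- The depth of a module `N` over a commutative noetherian local ring `S`,
`inf { i | Ext^i_S(k, N) ≠ 0 }`, as an element of the extended (integer) line,
with `inf ∅ = ⊤`. -/
noncomputable def moduleDepth (S : Type u) [CommRing S] [IsLocalRing S]
    (N : Type u) [AddCommGroup N] [Module S N] : EReal :=
  sInf {i : EReal | ∃ n : ℕ, i = (n : EReal) ∧
    Nontrivial (((Ext S (ModuleCat S) n).obj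
      (Opposite.op (ModuleCat.of S (IsLocalRing.ResidueField S)))).obj (ModuleCat.of S N))}

/-- The width of a module `N` over a commutative noetherian local ring `S`,
`inf { i | Tor_i^S(k, N) ≠ 0 }`, as an element of the extended (integer) line,
with `inf ∅ = ⊤`. -/
noncomputable def moduleWidth (S : Type u) [CommRing S] [IsLocalRing S]
    (N : Type u) [AddCommGroup N] [Module S N] : EReal :=
  sInf {i : EReal | ∃ n : ℕ, i = (n : EReal) ∧
    Nontrivial (((Tor (ModuleCat S) n).obj
      (ModuleCat.of S (IsLocalRing.ResidueField S))).obj (ModuleCat.of S N))}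

/-- `G` is Gorenstein injective: there is an exact complex of injective modules
`⋯ → I 1 → I 0 → I (-1) → ⋯` which stays exact after applying `Hom_R(J, -)` for every
injective module `J`, such that `G` is the kernel of `I 0 → I (-1)`. -/
def IsGorensteinInjective (R : Type u) [CommRing R]
    (G : Type u) [AddCommGroup G] [Module R G] : Prop :=
  ∃ (I : ℤ → Type u) (_ : ∀ n, AddCommGroup (I n)) (_ : ∀ n, Module R (I n))
    (d : ∀ n : ℤ, I (n + 1) →ₗ[R] I n),
    (∀ n, Module.Injective R (I n)) ∧
    (∀ n : ℤ, Function.Exact (d (n + 1)) (d n)) ∧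
    (∀ (J : Type u) (_ : AddCommGroup J) (_ : Module R J), Module.Injective R J →
      ∀ (n : ℤ) (f : J →ₗ[R] I (n + 1)), (d n).comp f = 0 →
        ∃ g : J →ₗ[R] I (n + 1 + 1), (d (n + 1)).comp g = f) ∧
    Nonempty (G ≃ₗ[R] LinearMap.ker (d (-1)))

section ExtVanishing

open scoped Pointwise

variable {S : Type u} [CommRing S]

/-- Given a short exact sequence `0 → X₁ → X₂ → X₃ → 0` whose second map induces zero on
`Ext(-, V)` in degrees below `n + 1`, vanishing of `Ext(X₁, V)` in degrees below `n` implies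
vanishing of `Ext(X₃, V)` in degrees below `n + 1`. -/
lemma subsingleton_ext_of_shortExact {T : ShortComplex (ModuleCat.{u} S)} (hT : T.ShortExact)
    (V : ModuleCat.{u} S) (n : ℕ)
    (hzero : ∀ (i : ℕ), i < n + 1 → ∀ x : Abelian.Ext T.X₃ V i,
      (Abelian.Ext.mk₀ T.g).comp x (zero_add i) = 0)
    (hX₁ : ∀ i < n, Subsingleton (Abelian.Ext T.X₁ V i)) :
    ∀ i < n + 1, Subsingleton (Abelian.Ext T.X₃ V i) := by
  intro i hi
  refine subsingleton_of_forall_eq 0 fun x => ?_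
  have hx := hzero i hi x
  cases i with
  | zero =>
    have := hT.epi_g
    refine Abelian.Ext.precomp_mk₀_injective_of_epi V T.g ?_
    simpa using hx
  | succ j =>
    obtain ⟨y, rfl⟩ := Abelian.Ext.contravariant_sequence_exact₃ hT V x hx (add_comm 1 j)
    have := hX₁ j (by lia)
    rw [Subsingleton.elim y 0, Abelian.Ext.comp_zero]

lemma smul_ext_eq_zero {r : S} {V : ModuleCat.{u} S} (hr : ∀ v : V, r • v = 0)
    {X : ModuleCat.{u} S} {i : ℕ} (x : Abelian.Ext X V i) : r • x = 0 := by
  have h : r • 𝟙 V = 0 := by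
    ext v
    exact hr v
  rw [Abelian.Ext.smul_eq_comp_mk₀, h, Abelian.Ext.mk₀_zero, Abelian.Ext.comp_zero]

lemma exact_lcomp_mkQ_lsmul (N E : Type u) [AddCommGroup N] [Module S N] [AddCommGroup E]
    [Module S E] (r : S) :
    Function.Exact (LinearMap.lcomp S E (r • (⊤ : Submodule S N)).mkQ)
      (LinearMap.lsmul S (N →ₗ[S] E) r) := by
  intro f
  constructor
  · intro hf
    refine ⟨Submodule.liftQ _ f ?_, ?_⟩
    · intro x hx
      obtain ⟨y, -, rfl⟩ := (Submodule.mem_smul_pointwise_iff_exists _ _ _).1 hx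
      simpa using LinearMap.congr_fun hf y
    · ext x
      rfl
  · rintro ⟨g, rfl⟩
    ext x
    have hx : (r • (⊤ : Submodule S N)).mkQ (r • x) = 0 := by
      exact (Submodule.Quotient.mk_eq_zero _).2
        ((Submodule.mem_smul_pointwise_iff_exists _ _ _).2 ⟨x, trivial, rfl⟩)
    simpa using congrArg g hx

/-- If `E` is injective and `Extⁱ(k, N) = 0` for `i < n`, then `Extⁱ(Hom(N, E), V) = 0` for
`i < n` and every module `V` annihilated by the maximal ideal. -/
lemma subsingleton_ext_linearMap_of_injective [IsLocalRing S] [IsNoetherianRing S]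
    (E : Type u) [AddCommGroup E] [Module S E] [hE : Module.Injective S E]
    (V : ModuleCat.{u} S) (hV : ∀ r ∈ IsLocalRing.maximalIdeal S, ∀ v : V, r • v = 0) (n : ℕ) :
    ∀ (N : Type u) [AddCommGroup N] [Module S N] [Module.Finite S N],
      (∀ i < n, Subsingleton (Abelian.Ext (ModuleCat.of S (IsLocalRing.ResidueField S))
        (ModuleCat.of S N) i)) →
      ∀ i < n, Subsingleton (Abelian.Ext (ModuleCat.of S (N →ₗ[S] E)) V i) := by
  induction n with
  | zero => intro N _ _ _ _ i hi; lia
  | succ n ih =>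
    intro N _ _ _ hN
    have hHom : Subsingleton (IsLocalRing.ResidueField S →ₗ[S] N) := by
      have := hN 0 (by lia)
      exact ((ModuleCat.homEquiv (M := ModuleCat.of S (IsLocalRing.ResidueField S))
        (N := ModuleCat.of S N)).symm.trans Abelian.Ext.addEquiv₀.symm.toEquiv).subsingleton
    obtain ⟨r, hr, hreg⟩ := IsSMulRegular.subsingleton_linearMap_iff.1 hHom
    have hr' : r ∈ IsLocalRing.maximalIdeal S := by
      rw [Module.mem_annihilator] at hr
      have h1 := hr 1
      rwa [Algebra.smul_def, mul_one, IsLocalRing.ResidueField.algebraMap_eq,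
        IsLocalRing.residue_eq_zero_iff] at h1
    have hQ : ∀ i < n, Subsingleton (Abelian.Ext
        (ModuleCat.of S (IsLocalRing.ResidueField S))
        (ModuleCat.of S (N ⧸ r • (⊤ : Submodule S N))) i) := by
      intro i hi
      refine subsingleton_of_forall_eq 0 fun x => ?_
      have hses := IsSMulRegular.smulShortComplex_shortExact (M := ModuleCat.of S N) hreg
      have h1 := hN (i + 1) (by lia)
      obtain ⟨y, hy⟩ := Abelian.Ext.covariant_sequence_exact₃ _ hses (n₀ := i) x rfl
        (h1.elim _ _)
      have h0 := hN i (by lia)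
      obtain rfl : y = 0 := h0.elim _ _
      exact hy.symm.trans (Abelian.Ext.zero_comp _ _ _ _ _)
    let T : ShortComplex (ModuleCat.{u} S) := ModuleCat.shortComplexOfCompEqZero
      (LinearMap.lcomp S E (r • (⊤ : Submodule S N)).mkQ) (LinearMap.lsmul S (N →ₗ[S] E) r)
      (exact_lcomp_mkQ_lsmul N E r).linearMap_comp_eq_zero
    have hT : T.ShortExact := by
      refine ModuleCat.shortComplex_shortExact T (exact_lcomp_mkQ_lsmul N E r) ?_ ?_
      · intro f g hfg
        exact (LinearMap.cancel_right (Submodule.mkQ_surjective _)).1 hfg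
      · intro f
        obtain ⟨h, hh⟩ := hE.out (LinearMap.lsmul S N r) hreg f
        refine ⟨h, LinearMap.ext fun x => ?_⟩
        rw [← hh x]
        exact (h.map_smul r x).symm
    refine subsingleton_ext_of_shortExact hT V n ?_ (ih _ hQ)
    intro i _ x
    have hg : T.g = r • 𝟙 (ModuleCat.of S (N →ₗ[S] E)) := rfl
    change Abelian.Ext (ModuleCat.of S (N →ₗ[S] E)) V i at x
    have : (Abelian.Ext.mk₀ (r • 𝟙 (ModuleCat.of S (N →ₗ[S] E)))).comp x (zero_add i) = 0 := by
      rw [Abelian.Ext.mk₀_smul, Abelian.Ext.smul_comp, Abelian.Ext.mk₀_id_comp,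
        smul_ext_eq_zero (hV r hr')]
    exact this

end ExtVanishing

section Comparison

variable {S : Type u} [CommRing S]

/-- Vanishing of `Ext` defined by projective resolutions implies vanishing of `Abelian.Ext`. -/
lemma subsingleton_abelianExt_of_subsingleton_ext {X Y : ModuleCat.{u} S} {n : ℕ}
    (h : Subsingleton (((Ext S (ModuleCat S) n).obj (Opposite.op X)).obj Y)) :
    Subsingleton (Abelian.Ext X Y n) := by
  let P : ProjectiveResolution X := ProjectiveResolution.of X
  have hz : Limits.IsZero (((Ext S (ModuleCat S) n).obj (Opposite.op X)).obj Y) :=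
    ModuleCat.isZero_of_subsingleton _
  have hex := (HomologicalComplex.exactAt_iff_isZero_homology _ _).2
    (hz.of_iso (P.isoExt (R := S) n Y).symm)
  refine subsingleton_of_forall_eq 0 fun x => ?_
  obtain ⟨f, hf, rfl⟩ := P.extMk_surjective x (n + 1) rfl
  cases n with
  | zero =>
    rw [HomologicalComplex.exactAt_iff' _ 0 0 1 (by simp) (by simp),
      ShortComplex.moduleCat_exact_iff] at hex
    obtain ⟨g, hg⟩ := hex f hf
    have hf0 : f = 0 := by
      rw [← hg]
      have : (P.complex.linearYonedaObj S Y).d 0 0 = 0 :=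
        (P.complex.linearYonedaObj S Y).shape _ _ (by simp)
      change ((P.complex.linearYonedaObj S Y).d 0 0).hom g = 0
      rw [this]
      rfl
    subst hf0
    exact P.extMk_zero _ _
  | succ n =>
    rw [HomologicalComplex.exactAt_iff' _ n (n + 1) (n + 2) (by simp) (by simp),
      ShortComplex.moduleCat_exact_iff] at hex
    obtain ⟨g, hg⟩ := hex f hf
    exact (P.extMk_eq_zero_iff f _ rfl hf n rfl).2 ⟨g, hg⟩

lemma exists_character_of_notMem {A : Type u} [AddCommGroup A] [Module S A] (B : Submodule S A)
    {z : A} (hz : z ∉ B) : ∃ c : CharacterModule A, (∀ b ∈ B, c b = 0) ∧ c z ≠ 0 := by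
  have hz' : B.mkQ z ≠ 0 := by simpa using hz
  obtain ⟨c, hc⟩ := CharacterModule.exists_character_apply_ne_zero_of_ne_zero hz'
  refine ⟨CharacterModule.dual B.mkQ c, fun b hb => ?_, hc⟩
  have hb' : B.mkQ b = 0 := by simpa using hb
  change c (B.mkQ b) = 0
  rw [hb']
  exact c.map_zero

open TensorProduct in
/-- `Tor_n(X, Y)` vanishes as soon as `Ext^n(Y, X⋆)` does, where `X⋆` is the character module. -/
lemma subsingleton_tor_of_subsingleton_ext_characterModule (X Y : Type u) [AddCommGroup X]
    [Module S X] [AddCommGroup Y] [Module S Y] {n : ℕ}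
    (h : Subsingleton (Abelian.Ext (ModuleCat.of S Y)
      (ModuleCat.of S (CharacterModule X)) n)) :
    Subsingleton (((Tor (ModuleCat S) n).obj (ModuleCat.of S X)).obj (ModuleCat.of S Y)) := by
  cases n with
  | zero =>
    have hHom : Subsingleton (Y →ₗ[S] CharacterModule X) :=
      ((ModuleCat.homEquiv (M := ModuleCat.of S Y)
        (N := ModuleCat.of S (CharacterModule X))).symm.trans
          Abelian.Ext.addEquiv₀.symm.toEquiv).subsingleton
    have hten : Subsingleton (X ⊗[S] Y) := by
      refine subsingleton_of_forall_eq 0 fun z => ?_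
      refine CharacterModule.eq_zero_of_character_apply fun c => ?_
      have := (CharacterModule.homEquiv (R := S) (A := Y) (B := X)).symm.subsingleton
      have hc : CharacterModule.dual (TensorProduct.comm S Y X).toLinearMap c = 0 :=
        Subsingleton.elim _ _
      obtain ⟨w, rfl⟩ := (TensorProduct.comm S Y X).surjective z
      exact DFunLike.congr_fun hc w
    exact ((((MonoidalCategory.tensoringLeft (ModuleCat.{u} S)).obj
      (ModuleCat.of S X)).leftDerivedZeroIsoSelf.app
        (ModuleCat.of S Y)).toLinearEquiv.toEquiv).subsingleton_congr.2 hten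
  | succ n =>
    let P : ProjectiveResolution (ModuleCat.of S Y) := ProjectiveResolution.of _
    let F := (MonoidalCategory.tensoringLeft (ModuleCat.{u} S)).obj (ModuleCat.of S X)
    suffices hex : ((F.mapHomologicalComplex (ComplexShape.down ℕ)).obj P.complex).ExactAt
        (n + 1) by
      rw [HomologicalComplex.exactAt_iff_isZero_homology] at hex
      exact ModuleCat.subsingleton_of_isZero (hex.of_iso (P.isoLeftDerivedObj F (n + 1)))
    rw [HomologicalComplex.exactAt_iff' _ (n + 2) (n + 1) n (by simp) (by simp),
      ShortComplex.moduleCat_exact_iff]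
    intro z hz
    let d₂ : P.complex.X (n + 2) →ₗ[S] P.complex.X (n + 1) := (P.complex.d (n + 2) (n + 1)).hom
    let d₁ : P.complex.X (n + 1) →ₗ[S] P.complex.X n := (P.complex.d (n + 1) n).hom
    change X ⊗[S] P.complex.X (n + 1) at z
    change d₁.lTensor X z = 0 at hz
    change ∃ y, d₂.lTensor X y = z
    by_contra hne
    obtain ⟨c, hc, hcz⟩ := exists_character_of_notMem (LinearMap.range (d₂.lTensor X)) hne
    let f : P.complex.X (n + 1) →ₗ[S] CharacterModule X := CharacterModule.homEquiv.symm
      (CharacterModule.dual (TensorProduct.comm S _ X).toLinearMap c)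
    have hfap (p : P.complex.X (n + 1)) (x : X) : f p x = c (x ⊗ₜ p) := rfl
    have hf : P.complex.d (n + 2) (n + 1) ≫
        (ModuleCat.ofHom f : _ ⟶ ModuleCat.of S (CharacterModule X)) = 0 := by
      ext p x
      exact hc (d₂.lTensor X (x ⊗ₜ[S] p)) ⟨_, rfl⟩
    obtain ⟨g, hg⟩ := (P.extMk_eq_zero_iff (ModuleCat.ofHom f) (n + 2) rfl hf n rfl).1
      (h.elim _ _)
    let c' : CharacterModule (X ⊗[S] P.complex.X n) :=
      CharacterModule.dual (TensorProduct.comm S X _).toLinearMap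
        (CharacterModule.homEquiv g.hom)
    have hcc' : CharacterModule.dual (d₁.lTensor X) c' = c := by
      refine CharacterModule.ext _ fun w => ?_
      induction w with
      | zero => exact (map_zero _).trans (map_zero _).symm
      | add a b ha hb =>
        exact (map_add _ a b).trans ((congrArg₂ _ ha hb).trans (map_add c a b).symm)
      | tmul x p =>
        exact DFunLike.congr_fun (ConcreteCategory.congr_hom hg p) x
    apply hcz
    rw [← hcc']
    change c' (d₁.lTensor X z) = 0
    rw [hz]
    exact c'.map_zero

end Comparison

section Localization

variable {R : Type u} [CommRing R]

/-- Over a noetherian ring, localizations of injective modules are injective. -/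
lemma injective_localizedModule [IsNoetherianRing R] (p : Submonoid R) (I : Type u)
    [AddCommGroup I] [Module R I] [hI : Module.Injective R I] :
    Module.Injective (Localization p) (LocalizedModule p I) := by
  refine Module.Baer.injective fun J g => ?_
  let a : Ideal R := J.comap (algebraMap R (Localization p))
  let ι : a →ₗ[R] J :=
    { toFun := fun x => ⟨algebraMap R (Localization p) x, x.2⟩
      map_add' := fun x y => by ext; simp
      map_smul' := fun r x => by ext; simp [Algebra.smul_def] }
  have : Module.FinitePresentation R a := Module.finitePresentation_of_finite R a
  obtain ⟨h, s, hs⟩ := Module.FinitePresentation.exists_lift_of_isLocalizedModule p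
    (LocalizedModule.mkLinearMap p I) (g.restrictScalars R ∘ₗ ι)
  obtain ⟨h', hh'⟩ := Module.Baer.of_injective hI a h
  refine ⟨LinearMap.toSpanSingleton _ _ (LocalizedModule.mk (h' 1) s), fun y hy => ?_⟩
  obtain ⟨⟨x, t⟩, hxt⟩ := IsLocalization.surj p y
  have hx : x ∈ a := by
    change algebraMap R (Localization p) x ∈ J
    rw [← hxt]
    exact J.mul_mem_right _ hy
  have hhx : h ⟨x, hx⟩ = x • h' 1 := by
    rw [← hh' x hx, ← map_smul, smul_eq_mul, mul_one]
  have hty : t • (⟨y, hy⟩ : J) = ι ⟨x, hx⟩ := by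
    ext
    change t • y = algebraMap R (Localization p) x
    rw [← hxt, mul_comm, Submonoid.smul_def, Algebra.smul_def]
  have hg : s • t • g ⟨y, hy⟩ = LocalizedModule.mkLinearMap p I (x • h' 1) := by
    have h1 := LinearMap.congr_fun hs ⟨x, hx⟩
    change LocalizedModule.mkLinearMap p I (h ⟨x, hx⟩) = s • g (ι ⟨x, hx⟩) at h1
    rw [← hhx, h1, ← hty]
    congr 1
    exact ((g.restrictScalars R).map_smul (t : R) ⟨y, hy⟩).symm
  have hsm : s • LocalizedModule.mk (h' 1) s = LocalizedModule.mkLinearMap p I (h' 1) := by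
    rw [Submonoid.smul_def, LocalizedModule.smul'_mk, LocalizedModule.mkLinearMap_apply,
      ← Submonoid.smul_def, LocalizedModule.mk_cancel]
  apply IsLocalizedModule.smul_injective (LocalizedModule.mkLinearMap p I) t
  apply IsLocalizedModule.smul_injective (LocalizedModule.mkLinearMap p I) s
  change s • t • (y • LocalizedModule.mk (h' 1) s) = s • t • g ⟨y, hy⟩
  have hy' : t • y = algebraMap R (Localization p) x := congrArg Subtype.val hty
  rw [hg, map_smul, ← hsm, ← smul_assoc t y, hy', algebraMap_smul, smul_comm]

end Localization

section Resolution

variable {R : Type u} [CommRing R]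

lemma subsingleton_ext_localized_ker [IsNoetherianRing R] (p : Ideal R) [p.IsPrime]
    (I : ℤ → Type u) [∀ n, AddCommGroup (I n)] [∀ n, Module R (I n)]
    (d : ∀ n : ℤ, I (n + 1) →ₗ[R] I n) (hI : ∀ n, Module.Injective R (I n))
    (hd : ∀ n : ℤ, Function.Exact (d (n + 1)) (d n))
    (V : ModuleCat.{u} (Localization.AtPrime p))
    (hV : ∀ r ∈ IsLocalRing.maximalIdeal (Localization.AtPrime p), ∀ v : V, r • v = 0) (n : ℕ)
    (hdepth : ∀ i < n, Subsingleton (Abelian.Ext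
      (ModuleCat.of (Localization.AtPrime p)
        (IsLocalRing.ResidueField (Localization.AtPrime p)))
      (ModuleCat.of (Localization.AtPrime p) (Localization.AtPrime p)) i)) :
    ∀ m : ℤ, ∀ i < n, Subsingleton (Abelian.Ext (ModuleCat.of (Localization.AtPrime p)
      (LocalizedModule p.primeCompl (LinearMap.ker (d m)))) V i) := by
  have : IsNoetherianRing (Localization.AtPrime p) :=
    IsLocalization.isNoetherianRing p.primeCompl _ inferInstance
  have hinj (m : ℤ) : ∀ i < n, Subsingleton (Abelian.Ext (ModuleCat.of (Localization.AtPrime p)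
      (LocalizedModule p.primeCompl (I m))) V i) := by
    intro i hi
    have := injective_localizedModule p.primeCompl (I m)
    have h1 := subsingleton_ext_linearMap_of_injective
      (LocalizedModule p.primeCompl (I m)) V hV n (Localization.AtPrime p) hdepth i hi
    let e : ModuleCat.of (Localization.AtPrime p) (LocalizedModule p.primeCompl (I m)) ≅
        ModuleCat.of (Localization.AtPrime p)
          (Localization.AtPrime p →ₗ[Localization.AtPrime p] LocalizedModule p.primeCompl (I m)) :=
      (LinearMap.ringLmapEquivSelf (Localization.AtPrime p) (Localization.AtPrime p)
        (LocalizedModule p.primeCompl (I m))).symm.toModuleIso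
    refine subsingleton_of_forall_eq 0 fun x => ?_
    have h2 : (Abelian.Ext.mk₀ e.hom).comp ((Abelian.Ext.mk₀ e.inv).comp x (zero_add i))
        (zero_add i) = x := by
      rw [Abelian.Ext.mk₀_comp_mk₀_assoc, e.hom_inv_id, Abelian.Ext.mk₀_id_comp]
    rw [← h2, h1.elim ((Abelian.Ext.mk₀ e.inv).comp x (zero_add i)) 0, Abelian.Ext.comp_zero]
  induction n with
  | zero => intro m i hi; lia
  | succ n ih =>
    intro m
    let f : LinearMap.ker (d (m + 1)) →ₗ[R] I (m + 1 + 1) := Submodule.subtype _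
    let g : I (m + 1 + 1) →ₗ[R] LinearMap.ker (d m) :=
      (d (m + 1)).codRestrict _ fun x => (hd m).apply_apply_eq_zero x
    have hfg : Function.Exact f g := by
      intro x
      exact ⟨fun hx => ⟨⟨x, congrArg Subtype.val hx⟩, rfl⟩,
        fun ⟨y, hy⟩ => Subtype.ext (hy ▸ y.2)⟩
    have hg : Function.Surjective g := by
      rintro ⟨x, hx⟩
      obtain ⟨y, hy⟩ := (hd m x).1 hx
      exact ⟨y, Subtype.ext hy⟩
    have hex : Function.Exact (LocalizedModule.map p.primeCompl f)
        (LocalizedModule.map p.primeCompl g) := LocalizedModule.map_exact _ f g hfg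
    let T : ShortComplex (ModuleCat.{u} (Localization.AtPrime p)) :=
      ModuleCat.shortComplexOfCompEqZero _ _ hex.linearMap_comp_eq_zero
    have hT : T.ShortExact := ModuleCat.shortComplex_shortExact T hex
      (LocalizedModule.map_injective _ f Subtype.val_injective)
      (LocalizedModule.map_surjective _ g hg)
    refine subsingleton_ext_of_shortExact hT V n (fun i hi x => (hinj (m + 1 + 1) i hi).elim _ _)
      (ih (fun i hi => hdepth i (by lia)) (fun m i hi => hinj m i (by lia)) (m + 1))

end Resolution

/-- Let `R` be a commutative noetherian ring and `M` a Gorenstein injective `R`-module.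
Then for every prime ideal `p` of `R`, `depth R_p ≤ width_{R_p} M_p`. -/
theorem depth_le_width_of_gorensteinInjective
    (R : Type u) [CommRing R] [IsNoetherianRing R]
    (M : Type u) [AddCommGroup M] [Module R M]
    (hM : IsGorensteinInjective R M) (p : Ideal R) [p.IsPrime] :
    moduleDepth (Localization.AtPrime p) (Localization.AtPrime p) ≤
      moduleWidth (Localization.AtPrime p) (LocalizedModule p.primeCompl M) := by
  refine le_sInf ?_
  rintro _ ⟨n, rfl, hn⟩
  by_contra hlt
  rw [not_le] at hlt
  obtain ⟨I, _, _, d, hI, hd, -, ⟨e⟩⟩ := hM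
  let k := IsLocalRing.ResidueField (Localization.AtPrime p)
  have hdepth : ∀ i < n + 1, Subsingleton (Abelian.Ext
      (ModuleCat.of (Localization.AtPrime p) k)
      (ModuleCat.of (Localization.AtPrime p) (Localization.AtPrime p)) i) := by
    intro i hi
    refine subsingleton_abelianExt_of_subsingleton_ext (not_nontrivial_iff_subsingleton.1 ?_)
    intro hnt
    have h1 : moduleDepth (Localization.AtPrime p) (Localization.AtPrime p) ≤ (i : EReal) :=
      sInf_le ⟨i, rfl, hnt⟩
    have h2 : (i : EReal) ≤ (n : EReal) := by exact_mod_cast Nat.lt_succ_iff.1 hi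
    exact absurd hlt (not_lt.2 (h1.trans h2))
  have hV : ∀ r ∈ IsLocalRing.maximalIdeal (Localization.AtPrime p),
      ∀ v : CharacterModule k, r • v = 0 := by
    intro r hr v
    refine CharacterModule.ext _ fun x => ?_
    have hx : r • x = 0 := by
      rw [Algebra.smul_def, IsLocalRing.ResidueField.algebraMap_eq,
        (IsLocalRing.residue_eq_zero_iff r).2 hr, zero_mul]
    rw [CharacterModule.smul_apply, hx]
    exact v.map_zero.trans rfl
  have hK := subsingleton_ext_localized_ker p I d hI hd
    (ModuleCat.of (Localization.AtPrime p) (CharacterModule k)) hV (n + 1) hdepth (-1) n (by lia)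
  have hTor := subsingleton_tor_of_subsingleton_ext_characterModule k
    (LocalizedModule p.primeCompl (LinearMap.ker (d (-1)))) hK
  let e' : ModuleCat.of (Localization.AtPrime p) (LocalizedModule p.primeCompl M) ≅
      ModuleCat.of (Localization.AtPrime p)
        (LocalizedModule p.primeCompl (LinearMap.ker (d (-1)))) :=
    (IsLocalizedModule.mapEquiv p.primeCompl (LocalizedModule.mkLinearMap p.primeCompl M)
      (LocalizedModule.mkLinearMap p.primeCompl _) (Localization.AtPrime p) e).toModuleIso
  have hM := (((Tor (ModuleCat (Localization.AtPrime p)) n).obj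
    (ModuleCat.of (Localization.AtPrime p) k)).mapIso
      e').toLinearEquiv.toEquiv.subsingleton_congr.2 hTor
  exact not_nontrivial_iff_subsingleton.2 hM hn
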